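/- arXiv:2012.06341 — 2 statements merged into one kernel-verified Lean document; each statement's English description precedes it below -/
import Mathlib

section
/- Let Φ be a real T×m matrix with full row rank (rank Φ = T, so T ≤ m) and let y ∈ ℝ^T. Define V(θ) = (1/2)‖Φθ − y‖² and the gradient-descent iteration θ^{i+1} = θ^i − γ Φᵀ(Φθ^i − y) with initialization θ^0 lying in the row space of Φ (the range of Φᵀ). Let θ̂ denote the minimum Euclidean-norm minimizer of V. Then there exists γ̃ > 0 such that for every step size γ ∈ (0, γ̃), the iterates θ^i converge to θ̂ as i → ∞. -/
open Matrix Filter Topology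

/-- Euclidean norm on `Fin n → ℝ`. -/
noncomputable def euclNorm {n : ℕ} (v : Fin n → ℝ) : ℝ := Real.sqrt (∑ i, (v i) ^ 2)

/-!
With `A` the linear map of `Φ`, the error `θ i - θhat` evolves by `L = 1 - γ A†A`. Expanding
squares, `‖L x‖² ≤ ‖x‖² - γ (2 - γ ‖A‖²) ‖A x‖²`, so `‖A (Lⁿ x)‖²` is summable and `A (Lⁿ x) → 0`.
Applied to `A†` instead of `A`, and since `L A† = A† (1 - γ A A†)`, this says that `Lⁿ → 0`
pointwise on the range of `A†`, hence on its closure because `‖L‖ ≤ 1`. That closure is the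
orthogonal complement of `ker A`, which contains the minimizer of least norm; so it contains the
initial error.
-/

section Landweber

open ContinuousLinearMap

variable {𝕜 E F : Type*} [RCLike 𝕜]
  [NormedAddCommGroup E] [InnerProductSpace 𝕜 E] [CompleteSpace E]
  [NormedAddCommGroup F] [InnerProductSpace 𝕜 F] [CompleteSpace F]

/-- The Landweber operator `1 - γ A†A`, through which the error of gradient descent on
`x ↦ (1/2)‖A x - y‖²` with step size `γ` propagates. The step size is real also over `ℂ`. -/
noncomputable def landweberOp (A : E →L[𝕜] F) (γ : ℝ) : E →L[𝕜] E :=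
  1 - (γ : 𝕜) • (adjoint A ∘L A)

theorem landweberOp_apply (A : E →L[𝕜] F) (γ : ℝ) (x : E) :
    landweberOp A γ x = x - (γ : 𝕜) • adjoint A (A x) :=
  rfl

theorem norm_landweberOp_apply_sq_le (A : E →L[𝕜] F) (γ : ℝ) (x : E) :
    ‖landweberOp A γ x‖ ^ 2 ≤ ‖x‖ ^ 2 - γ * (2 - γ * ‖A‖ ^ 2) * ‖A x‖ ^ 2 := by
  have hinner : RCLike.re (inner 𝕜 x ((γ : 𝕜) • adjoint A (A x))) = γ * ‖A x‖ ^ 2 := by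
    rw [inner_smul_right, adjoint_inner_right, RCLike.re_ofReal_mul, inner_self_eq_norm_sq]
  have hadj : ‖adjoint A (A x)‖ ^ 2 ≤ ‖A‖ ^ 2 * ‖A x‖ ^ 2 := by
    rw [← mul_pow, ← LinearIsometryEquiv.norm_map adjoint A]
    gcongr
    exact le_opNorm _ _
  calc ‖landweberOp A γ x‖ ^ 2
      = ‖x‖ ^ 2 - 2 * (γ * ‖A x‖ ^ 2) + γ ^ 2 * ‖adjoint A (A x)‖ ^ 2 := by
        rw [landweberOp_apply, norm_sub_sq (𝕜 := 𝕜), hinner, norm_smul, mul_pow,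
          RCLike.norm_ofReal, sq_abs]
    _ ≤ ‖x‖ ^ 2 - 2 * (γ * ‖A x‖ ^ 2) + γ ^ 2 * (‖A‖ ^ 2 * ‖A x‖ ^ 2) := by gcongr
    _ = ‖x‖ ^ 2 - γ * (2 - γ * ‖A‖ ^ 2) * ‖A x‖ ^ 2 := by ring

theorem norm_landweberOp_le_one (A : E →L[𝕜] F) {γ : ℝ} (hγ : 0 ≤ γ) (hγA : γ * ‖A‖ ^ 2 ≤ 2) :
    ‖landweberOp A γ‖ ≤ 1 := by
  refine opNorm_le_bound _ zero_le_one fun x ↦ ?_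
  rw [one_mul]
  refine le_of_sq_le_sq ((norm_landweberOp_apply_sq_le A γ x).trans ?_) (norm_nonneg x)
  exact sub_le_self _ (mul_nonneg (mul_nonneg hγ (sub_nonneg.2 hγA)) (sq_nonneg _))

theorem summable_norm_map_landweberOp_iterate_sq (A : E →L[𝕜] F) {γ : ℝ} (hγ : 0 < γ)
    (hγA : γ * ‖A‖ ^ 2 < 2) (x : E) :
    Summable fun n ↦ ‖A ((landweberOp A γ)^[n] x)‖ ^ 2 := by
  set L := landweberOp A γ
  set c := γ * (2 - γ * ‖A‖ ^ 2)
  have hc : 0 < c := mul_pos hγ (sub_pos.2 hγA)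
  have hdecrease (n : ℕ) : c * ‖A (L^[n] x)‖ ^ 2 ≤ ‖L^[n] x‖ ^ 2 - ‖L^[n + 1] x‖ ^ 2 := by
    rw [Function.iterate_succ_apply']
    linarith [norm_landweberOp_apply_sq_le A γ (L^[n] x)]
  refine (summable_mul_left_iff hc.ne').1
    (summable_of_sum_range_le (c := ‖x‖ ^ 2) (fun n ↦ by positivity) fun n ↦ ?_)
  calc ∑ i ∈ Finset.range n, c * ‖A (L^[i] x)‖ ^ 2
      ≤ ∑ i ∈ Finset.range n, (‖L^[i] x‖ ^ 2 - ‖L^[i + 1] x‖ ^ 2) :=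
        Finset.sum_le_sum fun i _ ↦ hdecrease i
    _ = ‖x‖ ^ 2 - ‖L^[n] x‖ ^ 2 := Finset.sum_range_sub' (fun i ↦ ‖L^[i] x‖ ^ 2) n
    _ ≤ ‖x‖ ^ 2 := sub_le_self _ (sq_nonneg _)

theorem tendsto_map_landweberOp_iterate (A : E →L[𝕜] F) {γ : ℝ} (hγ : 0 < γ)
    (hγA : γ * ‖A‖ ^ 2 < 2) (x : E) :
    Tendsto (fun n ↦ A ((landweberOp A γ)^[n] x)) atTop (𝓝 0) := by
  rw [tendsto_zero_iff_norm_tendsto_zero]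
  simpa using (summable_norm_map_landweberOp_iterate_sq A hγ hγA x).tendsto_atTop_zero.sqrt

theorem semiconj_adjoint_landweberOp (A : E →L[𝕜] F) (γ : ℝ) :
    Function.Semiconj (adjoint A) (landweberOp (adjoint A) γ) (landweberOp A γ) := fun z ↦ by
  simp only [landweberOp_apply, adjoint_adjoint, map_sub, map_smul]

theorem tendsto_landweberOp_iterate_of_mem_closure_range_adjoint (A : E →L[𝕜] F) {γ : ℝ}
    (hγ : 0 < γ) (hγA : γ * ‖A‖ ^ 2 < 2) {x : E} (hx : x ∈ closure (Set.range (adjoint A))) :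
    Tendsto (fun n ↦ (landweberOp A γ)^[n] x) atTop (𝓝 0) := by
  have hlip : LipschitzWith 1 (landweberOp A γ) :=
    (landweberOp A γ).lipschitz.weaken (norm_landweberOp_le_one A hγ.le hγA.le)
  have hequi : Equicontinuous fun n ↦ (landweberOp A γ)^[n] :=
    (LipschitzWith.uniformEquicontinuous _ 1 fun n ↦ by
      simpa only [one_pow] using hlip.iterate n).equicontinuous
  have hrange (z : F) : Tendsto (fun n ↦ (landweberOp A γ)^[n] (adjoint A z)) atTop (𝓝 0) := by
    simp only [← ((semiconj_adjoint_landweberOp A γ).iterate_right _).eq]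
    exact tendsto_map_landweberOp_iterate (adjoint A) hγ (by rwa [LinearIsometryEquiv.norm_map]) z
  exact closure_minimal (Set.forall_mem_range.2 hrange)
    (hequi.isClosed_setOfPred_tendsto continuous_const) hx

theorem mem_closure_range_adjoint_of_forall_norm_le (A : E →L[𝕜] F) {x : E}
    (hx : ∀ z, A z = A x → ‖x‖ ≤ ‖z‖) : x ∈ closure (Set.range (adjoint A)) := by
  have : CompleteSpace A.ker := A.isClosed_ker.completeSpace_coe
  -- The normal equation, for the inclusion of `ker A` with target `x`, at its minimizer `0`.
  have hnormal : adjoint A.ker.subtypeL (x - A.ker.subtypeL 0) = 0 := by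
    rw [← forall_norm_sub_apply_le_iff_adjoint_apply_sub_eq_zero]
    intro k
    rw [map_zero, sub_zero]
    exact hx _ (by simp)
  have horth : x ∈ A.kerᗮ := by
    rwa [map_zero, sub_zero, Submodule.adjoint_subtypeL,
      Submodule.orthogonalProjectionOnto_eq_zero_iff] at hnormal
  rwa [A.orthogonal_ker] at horth

theorem gradient_descent_tendsto_min_norm_minimizer_general (A : E →L[𝕜] F) (y : F)
    (V : E → ℝ) (hV : ∀ x, V x = (1 / 2) * ‖A x - y‖ ^ 2)
    (xhat : E) (hmin : ∀ x, V xhat ≤ V x)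
    (hminnorm : ∀ x, (∀ x', V x ≤ V x') → ‖xhat‖ ≤ ‖x‖)
    {γ : ℝ} (hγ : 0 < γ) (hγA : γ * ‖A‖ ^ 2 < 2) (x : ℕ → E)
    (hx₀ : x 0 ∈ closure (Set.range (adjoint A)))
    (hx : ∀ i, x (i + 1) = x i - (γ : 𝕜) • adjoint A (A (x i) - y)) :
    Tendsto x atTop (𝓝 xhat) := by
  have hresidual (z : E) : ‖y - A xhat‖ ≤ ‖y - A z‖ := by
    rw [norm_sub_rev y, norm_sub_rev y]
    exact le_of_sq_le_sq (by linarith [hmin z, hV z, hV xhat]) (norm_nonneg _)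
  have hnormal : adjoint A y = adjoint A (A xhat) := by
    rw [← sub_eq_zero, ← map_sub]
    exact (A.forall_norm_sub_apply_le_iff_adjoint_apply_sub_eq_zero y xhat).1 hresidual
  have hxhat : xhat ∈ closure (Set.range (adjoint A)) :=
    mem_closure_range_adjoint_of_forall_norm_le A fun z hz ↦
      hminnorm z fun x' ↦ by simpa only [hV, hz] using hmin x'
  have herror (i : ℕ) : x i - xhat = (landweberOp A γ)^[i] (x 0 - xhat) := by
    induction i with
    | zero => rfl
    | succ i ih =>
      have hgrad : adjoint A (A (x i) - y) = adjoint A (A (x i - xhat)) := by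
        rw [map_sub, map_sub A, map_sub, hnormal]
      rw [Function.iterate_succ_apply', ← ih, landweberOp_apply, hx, hgrad, sub_right_comm]
  have herror₀ : x 0 - xhat ∈ closure (Set.range (adjoint A)) :=
    (adjoint A).range.topologicalClosure.sub_mem hx₀ hxhat
  rw [← tendsto_sub_nhds_zero_iff]
  exact (tendsto_landweberOp_iterate_of_mem_closure_range_adjoint A hγ hγA herror₀).congr
    fun i ↦ (herror i).symm

end Landweber

theorem euclNorm_eq_norm_toLp {n : ℕ} (v : Fin n → ℝ) : euclNorm v = ‖WithLp.toLp 2 v‖ := by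
  simp only [EuclideanSpace.norm_eq, euclNorm, Real.norm_eq_abs, sq_abs]

theorem adjoint_toEuclideanLin_toLp {𝕜 ι κ : Type*} [RCLike 𝕜] [Fintype ι] [Fintype κ]
    [DecidableEq κ] (Φ : Matrix ι κ 𝕜) (w : ι → 𝕜) :
    Φ.toEuclideanLin.toContinuousLinearMap.adjoint (WithLp.toLp 2 w) =
      WithLp.toLp 2 (Φᴴ *ᵥ w) := by
  classical
  rw [← LinearMap.adjoint_toContinuousLinearMap, ← toEuclideanLin_conjTranspose_eq_adjoint,
    LinearMap.coe_toContinuousLinearMap', toLpLin_toLp, toLin'_apply]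

/-- Gradient descent on `V θ = (1/2)‖Φθ − y‖²`, initialized in the row space of `Φ`
(the range of `Φᵀ`), converges to the minimum Euclidean-norm minimizer of `V`
for all sufficiently small step sizes, provided `Φ` has full row rank. -/
theorem gradient_descent_tendsto_min_norm_minimizer
    (T m : ℕ) (Φ : Matrix (Fin T) (Fin m) ℝ) (y : Fin T → ℝ)
    (hrank : Φ.rank = T)
    (V : (Fin m → ℝ) → ℝ)
    (hV : ∀ θ, V θ = (1 / 2) * euclNorm (Φ.mulVec θ - y) ^ 2)
    (θhat : Fin m → ℝ)
    (hmin : ∀ θ, V θhat ≤ V θ)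
    (hminnorm : ∀ θ, (∀ θ', V θ ≤ V θ') → euclNorm θhat ≤ euclNorm θ) :
    ∃ γtilde > (0 : ℝ), ∀ γ : ℝ, 0 < γ → γ < γtilde →
      ∀ θ : ℕ → (Fin m → ℝ),
        θ 0 ∈ Set.range Φᵀ.mulVec →
        (∀ i, θ (i + 1) = θ i - γ • Φᵀ.mulVec (Φ.mulVec (θ i) - y)) →
        Tendsto θ atTop (𝓝 θhat) := by
  let A := Φ.toEuclideanLin.toContinuousLinearMap
  refine ⟨2 / (‖A‖ ^ 2 + 1), by positivity, fun γ hγ hγt θ ⟨w, hw⟩ hθ ↦ ?_⟩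
  have hγA : γ * ‖A‖ ^ 2 < 2 := by
    rw [lt_div_iff₀ (by positivity)] at hγt
    linarith
  have hadj (v : Fin T → ℝ) : A.adjoint (WithLp.toLp 2 v) = WithLp.toLp 2 (Φᵀ *ᵥ v) :=
    conjTranspose_eq_transpose_of_trivial Φ ▸ adjoint_toEuclideanLin_toLp Φ v
  simp only [euclNorm_eq_norm_toLp] at hV hminnorm
  have hlim := gradient_descent_tendsto_min_norm_minimizer_general A (WithLp.toLp 2 y)
    (fun x ↦ V x.ofLp) (fun x ↦ hV x.ofLp) (WithLp.toLp 2 θhat) (fun x ↦ hmin x.ofLp)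
    (fun x hx ↦ hminnorm x.ofLp fun θ' ↦ hx (WithLp.toLp 2 θ')) hγ hγA
    (fun i ↦ WithLp.toLp 2 (θ i)) (subset_closure ⟨WithLp.toLp 2 w, by rw [hadj, hw]⟩)
    (fun i ↦ by
      change _ = WithLp.toLp 2 (θ i) - γ • A.adjoint (WithLp.toLp 2 (Φ *ᵥ θ i - y))
      rw [hadj, hθ, WithLp.toLp_sub, WithLp.toLp_smul])
  exact ((PiLp.continuous_ofLp 2 _).tendsto _).comp hlim
end

section
/- Let γ > 0, let w ∈ ℝ^n be a random vector with independent N(0, 2γ) coordinates, and let b be an independent random variable uniform on [0, 2π). Then for all x, x' ∈ ℝ^n, E[2·cos(wᵀx + b)·cos(wᵀx' + b)] = exp(−γ‖x − x'‖²). That is, the random Fourier feature pairing is an unbiased estimator of the Gaussian kernel K(x, x') = exp(−γ‖x − x'‖²). -/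
/-!
The product-to-sum formula `2 cos u cos v = cos (u - v) + cos (u + v)` splits the feature product in
two. In the second summand the phase `b` occurs as `2b`, so averaging over a full period kills it;
in the first it cancels, leaving `cos (wᵀ(x - x'))`. The expectation over `w` is therefore the real
part of the characteristic function of `w` at `x - x'`: the Gaussian kernel is a Gaussian
characteristic function.
-/

open Matrix MeasureTheory ProbabilityTheory Real

section UniformPhase

/-- The uniform distribution on `[0, 2π)`, the law of the random phase of a Fourier feature, encoded
as normalized Lebesgue measure. -/
noncomputable def uniformPhase : Measure ℝ :=
  (ENNReal.ofReal (2 * π))⁻¹ • volume.restrict (Set.Ico (0 : ℝ) (2 * π))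

instance isProbabilityMeasure_uniformPhase : IsProbabilityMeasure uniformPhase where
  measure_univ := by
    have h_pos : ENNReal.ofReal (2 * π) ≠ 0 := by simp [pi_pos]
    simpa [uniformPhase] using ENNReal.inv_mul_cancel h_pos ENNReal.ofReal_ne_top

lemma integral_uniformPhase {E : Type*} [NormedAddCommGroup E] [NormedSpace ℝ E] (f : ℝ → E) :
    ∫ θ, f θ ∂uniformPhase = (2 * π)⁻¹ • ∫ θ in 0..2 * π, f θ := by
  rw [uniformPhase, integral_smul_measure, ENNReal.toReal_inv,
    ENNReal.toReal_ofReal two_pi_pos.le, integral_Ico_eq_integral_Ioc,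
    intervalIntegral.integral_of_le two_pi_pos.le]

lemma integral_cos_add_int_mul_uniformPhase (a : ℝ) {k : ℤ} (hk : k ≠ 0) :
    ∫ θ, cos (a + k * θ) ∂uniformPhase = 0 := by
  rw [integral_uniformPhase, intervalIntegral.integral_comp_add_mul cos (Int.cast_ne_zero.mpr hk),
    integral_cos, sin_add_int_mul_two_pi]
  simp

lemma integral_two_mul_cos_add_mul_cos_add_uniformPhase (a b : ℝ) :
    ∫ θ, 2 * cos (a + θ) * cos (b + θ) ∂uniformPhase = cos (a - b) := by
  have product_to_sum (θ : ℝ) :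
      2 * cos (a + θ) * cos (b + θ) = cos (a - b) + cos (a + b + (2 : ℤ) * θ) := by
    rw [two_mul_cos_mul_cos]
    push_cast
    ring_nf
  have h_int : Integrable (fun θ ↦ cos (a + b + (2 : ℤ) * θ)) uniformPhase :=
    .of_bound (by fun_prop) 1 (.of_forall fun _ ↦ abs_cos_le_one _)
  simp_rw [product_to_sum]
  rw [integral_add (integrable_const _) h_int,
    integral_cos_add_int_mul_uniformPhase _ two_ne_zero]
  simp

variable {Ω : Type*} [MeasurableSpace Ω] {μ : Measure Ω} [IsFiniteMeasure μ] {f g : Ω → ℝ}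

lemma integral_two_mul_cos_add_mul_cos_add_prod_uniformPhase
    (hf : AEMeasurable f μ) (hg : AEMeasurable g μ) :
    ∫ p : Ω × ℝ, 2 * cos (f p.1 + p.2) * cos (g p.1 + p.2) ∂(μ.prod uniformPhase)
      = ∫ ω, cos (f ω - g ω) ∂μ := by
  have cos_add_aesm {h : Ω → ℝ} (hh : AEMeasurable h μ) :
      AEStronglyMeasurable (fun p : Ω × ℝ ↦ cos (h p.1 + p.2)) (μ.prod uniformPhase) :=
    (measurable_cos.comp_aemeasurable
      (hh.comp_fst.add measurable_snd.aemeasurable)).aestronglyMeasurable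
  have h_int : Integrable (fun p : Ω × ℝ ↦ 2 * cos (f p.1 + p.2) * cos (g p.1 + p.2))
      (μ.prod uniformPhase) := by
    refine .of_bound (((cos_add_aesm hf).const_mul 2).mul (cos_add_aesm hg)) (2 * 1 * 1)
      (.of_forall fun p ↦ ?_)
    rw [norm_mul, norm_mul, norm_two]
    gcongr <;> exact abs_cos_le_one _
  rw [integral_prod _ h_int]
  simp_rw [integral_two_mul_cos_add_mul_cos_add_uniformPhase]

end UniformPhase

section CharFun

lemma integral_cos_inner_eq_re_charFun {E : Type*} [NormedAddCommGroup E] [InnerProductSpace ℝ E]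
    [MeasurableSpace E] [OpensMeasurableSpace E] (μ : Measure E) [IsFiniteMeasure μ] (t : E) :
    ∫ x, cos (inner ℝ x t) ∂μ = (charFun μ t).re := by
  have h_int : Integrable (fun x ↦ Complex.exp (inner ℝ x t * Complex.I)) μ :=
    .of_bound (Continuous.aestronglyMeasurable (by fun_prop)) 1
      (.of_forall fun _ ↦ (Complex.norm_exp_ofReal_mul_I _).le)
  rw [charFun_apply, ← RCLike.re_eq_complex_re, ← integral_re h_int]
  simp only [RCLike.re_eq_complex_re, Complex.exp_ofReal_mul_I_re]

variable {ι : Type*} [Fintype ι]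

lemma integral_cos_dotProduct_pi (μ : ι → Measure ℝ) [∀ i, IsFiniteMeasure (μ i)] (t : ι → ℝ) :
    ∫ w, cos (w ⬝ᵥ t) ∂Measure.pi μ = (∏ i, charFun (μ i) (t i)).re := by
  have inner_toLp (w : ι → ℝ) : inner ℝ (WithLp.toLp 2 w) (WithLp.toLp 2 t) = w ⬝ᵥ t := by
    rw [EuclideanSpace.inner_toLp_toLp, star_trivial, dotProduct_comm]
  calc ∫ w, cos (w ⬝ᵥ t) ∂Measure.pi μ
      = ∫ v, cos (inner ℝ v (WithLp.toLp 2 t)) ∂(Measure.pi μ).map (WithLp.toLp 2) := by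
        rw [integral_map (by fun_prop) (Continuous.aestronglyMeasurable (by fun_prop))]
        simp_rw [inner_toLp]
    _ = (∏ i, charFun (μ i) (t i)).re := by
        rw [integral_cos_inner_eq_re_charFun, charFun_pi]

lemma integral_cos_dotProduct_pi_gaussianReal (m : ι → ℝ) (v : ι → NNReal) (t : ι → ℝ) :
    ∫ w, cos (w ⬝ᵥ t) ∂Measure.pi (fun i ↦ gaussianReal (m i) (v i))
      = exp (-(∑ i, v i * t i ^ 2) / 2) * cos (m ⬝ᵥ t) := by
  have prod_charFun : ∏ i, charFun (gaussianReal (m i) (v i)) (t i)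
      = Complex.exp ((-(∑ i, v i * t i ^ 2) / 2 : ℝ) + (m ⬝ᵥ t : ℝ) * Complex.I) := by
    simp_rw [charFun_gaussianReal, ← Complex.exp_sum, dotProduct]
    push_cast
    rw [Finset.sum_sub_distrib, ← Finset.sum_mul, ← Finset.sum_div]
    simp_rw [mul_comm (t _ : ℂ)]
    ring_nf
  rw [integral_cos_dotProduct_pi, prod_charFun, Complex.exp_add, ← Complex.ofReal_exp,
    Complex.re_ofReal_mul, Complex.exp_ofReal_mul_I_re]

end CharFun

/-- Random Fourier features are unbiased estimators of the Gaussian kernel: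
for `w ∼ N(0, 2γI_n)` and an independent phase `b` uniform on `[0, 2π)`,
`E[2cos(wᵀx + b)cos(wᵀx' + b)] = exp(−γ‖x − x'‖²)`. -/
theorem random_fourier_features_unbiased_gaussian_kernel
    (n : ℕ) (γ : ℝ) (hγ : 0 < γ) (x x' : Fin n → ℝ) :
    ∫ p : (Fin n → ℝ) × ℝ,
        2 * Real.cos (p.1 ⬝ᵥ x + p.2) * Real.cos (p.1 ⬝ᵥ x' + p.2)
        ∂((Measure.pi fun _ : Fin n => gaussianReal 0 (Real.toNNReal (2 * γ))).prod
            ((ENNReal.ofReal (2 * π))⁻¹ • volume.restrict (Set.Ico (0 : ℝ) (2 * π))))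
      = Real.exp (-γ * ∑ j, (x j - x' j) ^ 2) := by
  have measurable_dotProduct (y : Fin n → ℝ) : Measurable fun w : Fin n → ℝ ↦ w ⬝ᵥ y :=
    Continuous.measurable (by fun_prop)
  rw [← uniformPhase, integral_two_mul_cos_add_mul_cos_add_prod_uniformPhase
    (measurable_dotProduct x).aemeasurable (measurable_dotProduct x').aemeasurable]
  simp_rw [← dotProduct_sub]
  rw [integral_cos_dotProduct_pi_gaussianReal (fun _ ↦ 0)]
  simp only [zero_dotProduct', cos_zero, mul_one, Pi.sub_apply, ← Finset.mul_sum,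
    Real.coe_toNNReal _ (mul_pos two_pos hγ).le]
  ring_nf
end
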